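/- arXiv:1308.3316 — 2 statements merged into one kernel-verified Lean document; each statement's English description precedes it below -/
import Mathlib

section
/- Let G be a finite abelian group, let A ⊆ ℤ be a nonempty set, and let b be an integer. Then D_{bA}(G) = D_A(gcd(b, exp(G))·G), where bA = {ba : a ∈ A} and gcd(b, exp(G))·G denotes the subgroup {gcd(b, exp(G))·g : g ∈ G}. -/
open Finset

/-- A sequence `g` over `G` has an `A`-weighted zero-subsum: there is a nonempty
index set `I` and weights `a i ∈ A` for `i ∈ I` with `∑ i ∈ I, a i • g i = 0`. -/
def HasWZS (A : Set ℤ) {G : Type*} [AddCommGroup G] {ℓ : ℕ} (g : Fin ℓ → G) : Prop :=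
  ∃ (I : Finset (Fin ℓ)) (a : Fin ℓ → ℤ), I.Nonempty ∧ (∀ i ∈ I, a i ∈ A) ∧
    ∑ i ∈ I, a i • g i = 0

/-- The `A`-weighted Davenport constant of `G`: the smallest `ℓ` such that every
sequence of length `ℓ` over `G` has an `A`-weighted zero-subsum. -/
noncomputable def DavW (A : Set ℤ) (G : Type*) [AddCommGroup G] : ℕ :=
  sInf {ℓ : ℕ | ∀ g : Fin ℓ → G, HasWZS A g}

/-- The plus-minus weighted Davenport constant. -/
noncomputable def Davpm (G : Type*) [AddCommGroup G] : ℕ :=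
  DavW ({1, -1} : Set ℤ) G

/-- The additive homomorphism `g ↦ d • g`; its range is the subgroup `dG`. -/
def scalarHom (d : ℕ) (G : Type*) [AddCommGroup G] : G →+ G :=
  AddMonoidHom.mk' (fun g => d • g) (fun a b => smul_add d a b)

/-!
Multiplying the weights by `b` amounts to multiplying the terms of the sequence by `b`, so
`bA`-weighted zero-subsums of sequences over `G` are `A`-weighted zero-subsums of sequences over
`bG`. By Bézout's identity `gcd(b, n) = b x + n y`, the subgroups `bG` and `gcd(b, n)G` coincide
as soon as `n` annihilates `G`.
-/

section HasWZS

variable {A : Set ℤ} {G H : Type*} [AddCommGroup G] [AddCommGroup H] {ℓ : ℕ}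

theorem hasWZS_comp_iff_of_injective {f : G →+ H} (hf : Function.Injective f) {g : Fin ℓ → G} :
    HasWZS A (f ∘ g) ↔ HasWZS A g := by
  simp only [HasWZS, Function.comp_apply, ← map_zsmul, ← map_sum, map_eq_zero_iff f hf]

theorem hasWZS_image_mul_left_iff {b : ℤ} {g : Fin ℓ → G} :
    HasWZS ((fun a => b * a) '' A) g ↔ HasWZS A (b • g) := by
  have sum_mul_smul (I : Finset (Fin ℓ)) (a : Fin ℓ → ℤ) :
      ∑ i ∈ I, (b * a i) • g i = ∑ i ∈ I, a i • (b • g) i :=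
    Finset.sum_congr rfl fun i _ => mul_zsmul' (g i) b (a i)
  constructor
  · rintro ⟨I, c, hI, hc, hsum⟩
    choose! a ha hac using hc
    refine ⟨I, a, hI, ha, ?_⟩
    rw [← sum_mul_smul, ← hsum]
    exact Finset.sum_congr rfl fun i hi => congrArg (· • g i) (hac i hi)
  · rintro ⟨I, a, hI, ha, hsum⟩
    exact ⟨I, fun i => b * a i, hI, fun i hi => Set.mem_image_of_mem _ (ha i hi),
      (sum_mul_smul I a).trans hsum⟩

theorem forall_hasWZS_image_mul_left_iff_forall_range {b : ℤ} :
    (∀ g : Fin ℓ → G, HasWZS ((fun a => b * a) '' A) g) ↔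
      ∀ h : Fin ℓ → (zsmulAddGroupHom b : G →+ G).range, HasWZS A h := by
  let φ : G →+ G := zsmulAddGroupHom b
  rw [φ.rangeRestrict_surjective.comp_left.forall]
  exact forall_congr' fun g => hasWZS_image_mul_left_iff.trans
    (hasWZS_comp_iff_of_injective φ.range.subtype_injective (g := φ.rangeRestrict ∘ g))

end HasWZS

theorem range_scalarHom_gcd_eq_range_zsmulAddGroupHom {G : Type*} [AddCommGroup G] {n : ℕ}
    (hn : AddMonoid.exponent G ∣ n) (b : ℤ) :
    (scalarHom (Int.gcd b n) G).range = (zsmulAddGroupHom b : G →+ G).range := by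
  apply le_antisymm
  · rintro _ ⟨g, rfl⟩
    have hng : (n : ℤ) • g = 0 := by
      rw [natCast_zsmul, AddMonoid.exponent_dvd_iff_forall_nsmul_eq_zero.mp hn]
    refine ⟨Int.gcdA b n • g, ?_⟩
    calc b • Int.gcdA b n • g
        = (b * Int.gcdA b n + n * Int.gcdB b n) • g := by
          rw [add_zsmul, mul_zsmul, mul_zsmul' g (n : ℤ), hng, zsmul_zero, add_zero]
      _ = Int.gcd b n • g := by rw [← Int.gcd_eq_gcd_ab, natCast_zsmul]
  · rintro _ ⟨g, rfl⟩
    obtain ⟨c, hc⟩ := Int.gcd_dvd_left b n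
    refine ⟨c • g, ?_⟩
    calc Int.gcd b n • c • g = ((Int.gcd b n : ℤ) * c) • g := by rw [mul_zsmul, natCast_zsmul]
      _ = b • g := by rw [← hc]

theorem stmt2_general {G : Type*} [AddCommGroup G] (A : Set ℤ) (b : ℤ) (ℓ : ℕ) :
    (∀ g : Fin ℓ → G, HasWZS ((fun a => b * a) '' A) g) ↔
      ∀ h : Fin ℓ → (scalarHom (Int.gcd b (AddMonoid.exponent G)) G).range, HasWZS A h := by
  rw [range_scalarHom_gcd_eq_range_zsmulAddGroupHom dvd_rfl,
    forall_hasWZS_image_mul_left_iff_forall_range]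

theorem stmt2 (G : Type) [AddCommGroup G] [Fintype G] (A : Set ℤ) (hA : A.Nonempty)
    (b : ℤ) :
    DavW ((fun a => b * a) '' A) G
      = DavW A (↥(scalarHom (Int.gcd b (AddMonoid.exponent G)) G).range) :=
  congrArg sInf (Set.ext (stmt2_general A b))
end

section
/- Let n, m_1, m_2 be pairwise coprime positive integers such that {log₂ m_i} + {log₂ n} ≥ 1 for each i ∈ {1, 2} and {log₂ m_1} + {log₂ m_2} + 2{log₂ n} < 3. Then D*_±(C_n ⊕ C_{n m_1 m_2}) = D_±(C_n ⊕ C_{n m_1 m_2}) = ⌊log₂(n² m_1 m_2)⌋ + 1. -/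
open Finset

/-- `D*₊₋(G)`: the maximum of `∑ i, ⌊log₂ m i⌋ + 1` over all ways of writing `G` as a
direct sum of cyclic groups of orders `m 1, …, m t`. -/
noncomputable def DavStarPM (G : Type*) [AddCommGroup G] : ℕ :=
  sSup {k : ℕ | ∃ (t : ℕ) (m : Fin t → ℕ), (∀ i, 0 < m i) ∧
    Nonempty (G ≃+ (∀ i, ZMod (m i))) ∧ k = (∑ i, Nat.log 2 (m i)) + 1}

/-!
A sequence has no plus-minus weighted zero-subsum exactly when its subset sums are pairwise
distinct: a signed zero-sum is an equality between the sum of the terms with sign `+1` and the sum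
of the terms with sign `-1`. Counting the `2 ^ ℓ` subset sums gives `D_±(G) ≤ ⌊log₂ |G|⌋ + 1`, and
the powers of two in each cyclic summand, whose subset sums are distinct by uniqueness of binary
expansions, give `D*_±(G) ≤ D_±(G)`. For `C_n ⊕ C_{n m₁ m₂} ≅ C_{n m₁} ⊕ C_{n m₂}` the two bounds
agree as soon as `{log₂ (n m₁)} + {log₂ (n m₂)} < 1`.
-/

/-- The family `g` is dissociated: distinct finite sets of indices have distinct sums. This is the
indexed version of `AddDissociated`; sequences may repeat terms, so a set would not do. -/
def DistinctSubsetSums {ι G : Type*} [AddCommMonoid G] (g : ι → G) : Prop :=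
  Function.Injective fun S : Finset ι ↦ ∑ i ∈ S, g i

namespace DistinctSubsetSums

variable {ι κ G H : Type*} [AddCommMonoid G] [AddCommMonoid H] {g : ι → G}

theorem comp_embedding (hg : DistinctSubsetSums g) (f : κ ↪ ι) : DistinctSubsetSums (g ∘ f) := by
  intro S T hST
  apply Finset.map_injective f
  apply hg
  simpa only [sum_map, Function.comp_apply] using hST

theorem map_injective (hg : DistinctSubsetSums g) (φ : G →+ H) (hφ : Function.Injective φ) :
    DistinctSubsetSums (φ ∘ g) := by
  intro S T hST
  apply hg
  apply hφ
  simpa only [map_sum, Function.comp_apply] using hST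

theorem two_pow_card_le [Fintype ι] [Finite G] (hg : DistinctSubsetSums g) :
    2 ^ Fintype.card ι ≤ Nat.card G := by
  simpa using Nat.card_le_card_of_injective _ hg

theorem sigma_single {ι : Type*} [DecidableEq ι] {κ G : ι → Type*} [∀ i, AddCommMonoid (G i)]
    {g : ∀ i, κ i → G i} (hg : ∀ i, DistinctSubsetSums (g i)) :
    DistinctSubsetSums fun p : Σ i, κ i ↦ Pi.single (M := G) p.1 (g p.1 p.2) := by
  let fiber (S : Finset (Σ i, κ i)) (i : ι) : Finset (κ i) :=
    S.preimage (Sigma.mk i) sigma_mk_injective.injOn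
  have sum_apply (S : Finset (Σ i, κ i)) (i : ι) :
      (∑ p ∈ S, Pi.single (M := G) p.1 (g p.1 p.2)) i = ∑ k ∈ fiber S i, g i k := by
    rw [Finset.sum_apply]
    have hout : ∀ p ∈ S, p ∉ Set.range (Sigma.mk i) →
        Pi.single (M := G) p.1 (g p.1 p.2) i = 0 := by
      rintro ⟨j, k⟩ - hj
      apply Pi.single_eq_of_ne
      rintro rfl
      exact hj ⟨k, rfl⟩
    simpa using (sum_preimage (Sigma.mk i) S sigma_mk_injective.injOn _ hout).symm
  intro S T hST
  ext ⟨i, k⟩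
  have hfiber : fiber S i = fiber T i := hg i <| by
    simpa only [sum_apply] using congrFun hST i
  simpa [fiber] using Finset.ext_iff.mp hfiber k

end DistinctSubsetSums

theorem distinctSubsetSums_two_pow {k N : ℕ} (hN : 2 ^ k ≤ N) :
    DistinctSubsetSums fun j : Fin k ↦ ((2 ^ (j : ℕ) : ℕ) : ZMod N) := by
  have sum_lt (S : Finset (Fin k)) : ∑ j ∈ S, 2 ^ (j : ℕ) < N :=
    calc ∑ j ∈ S, 2 ^ (j : ℕ) = ∑ i ∈ S.map Fin.valEmbedding, 2 ^ i := by simp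
      _ < 2 ^ k := Nat.geomSum_lt le_rfl (by simp)
      _ ≤ N := hN
  intro S T hST
  have hnat : ∑ j ∈ S, 2 ^ (j : ℕ) = ∑ j ∈ T, 2 ^ (j : ℕ) :=
    Nat.ModEq.eq_of_lt_of_lt ((ZMod.natCast_eq_natCast_iff _ _ _).mp (by simpa using hST))
      (sum_lt S) (sum_lt T)
  apply Finset.map_injective Fin.valEmbedding
  apply geomSum_injective le_rfl
  simpa using hnat

theorem exists_distinctSubsetSums_of_addEquiv_pi_zmod {ι G : Type*} [AddCommMonoid G] {m : ι → ℕ}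
    (hm : ∀ i, m i ≠ 0) (e : G ≃+ ∀ i, ZMod (m i)) :
    ∃ g : (Σ i, Fin (Nat.log 2 (m i))) → G, DistinctSubsetSums g := by
  classical
  have hpow (i : ι) := distinctSubsetSums_two_pow (Nat.pow_log_le_self 2 (hm i))
  exact ⟨_, (DistinctSubsetSums.sigma_single hpow).map_injective
    e.symm.toAddMonoidHom e.symm.injective⟩

section WeightedZeroSubsums

variable {G : Type*} [AddCommGroup G] {ℓ : ℕ} {g : Fin ℓ → G}

theorem DistinctSubsetSums.not_hasWZS (hg : DistinctSubsetSums g) :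
    ¬ HasWZS ({1, -1} : Set ℤ) g := by
  rintro ⟨I, a, ⟨i, hi⟩, ha, hsum⟩
  let P := I.filter (a · = 1)
  let N := I.filter (a · ≠ 1)
  have hP : ∑ j ∈ P, a j • g j = ∑ j ∈ P, g j :=
    sum_congr rfl fun j hj ↦ by rw [(mem_filter.mp hj).2, one_zsmul]
  have hN : ∑ j ∈ N, a j • g j = -∑ j ∈ N, g j := by
    rw [← sum_neg_distrib]
    refine sum_congr rfl fun j hj ↦ ?_
    obtain ⟨hjI, hj1⟩ := mem_filter.mp hj
    rw [(ha j hjI).resolve_left hj1, neg_one_zsmul]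
  have hPN : P = N := hg <| by
    rw [← sum_filter_add_sum_filter_not I (a · = 1), hP, hN] at hsum
    exact add_neg_eq_zero.mp hsum
  have hmem : i ∈ P ↔ i ∈ N := by rw [hPN]
  simp [P, N, hi] at hmem

theorem hasWZS_of_not_distinctSubsetSums (hg : ¬ DistinctSubsetSums g) :
    HasWZS ({1, -1} : Set ℤ) g := by
  obtain ⟨S, T, hST, hne⟩ := Function.not_injective_iff.mp hg
  let a (i : Fin ℓ) : ℤ := if i ∈ S then 1 else -1
  have hS : ∑ i ∈ S \ T, a i • g i = ∑ i ∈ S \ T, g i :=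
    sum_congr rfl fun i hi ↦ by simp [a, (mem_sdiff.mp hi).1]
  have hT : ∑ i ∈ T \ S, a i • g i = -∑ i ∈ T \ S, g i := by
    rw [← sum_neg_distrib]
    exact sum_congr rfl fun i hi ↦ by simp [a, (mem_sdiff.mp hi).2]
  refine ⟨symmDiff S T, a, symmDiff_nonempty.mpr hne, fun i _ ↦ ?_, ?_⟩
  · by_cases hi : i ∈ S <;> simp [a, hi]
  · rw [symmDiff_def, sup_eq_union, sum_union disjoint_sdiff_sdiff, hS, hT, ← sub_eq_add_neg,
      sum_sdiff_sub_sum_sdiff]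
    exact sub_eq_zero.mpr hST

theorem hasWZS_of_card_lt_two_pow [Finite G] (h : Nat.card G < 2 ^ ℓ) (g : Fin ℓ → G) :
    HasWZS ({1, -1} : Set ℤ) g := by
  apply hasWZS_of_not_distinctSubsetSums
  intro hg
  exact h.not_ge (by simpa using hg.two_pow_card_le)

end WeightedZeroSubsums

section DavenportConstants

variable {G : Type*} [AddCommGroup G]

variable (G) in
theorem davpm_le_log_card_add_one [Finite G] : Davpm G ≤ Nat.log 2 (Nat.card G) + 1 :=
  Nat.sInf_le <| hasWZS_of_card_lt_two_pow (Nat.lt_pow_succ_log_self one_lt_two _)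

theorem hasWZS_of_length_eq_davpm [Finite G] (g : Fin (Davpm G) → G) :
    HasWZS ({1, -1} : Set ℤ) g := by
  have hne : {ℓ : ℕ | ∀ g : Fin ℓ → G, HasWZS ({1, -1} : Set ℤ) g}.Nonempty :=
    ⟨_, hasWZS_of_card_lt_two_pow (Nat.lt_pow_succ_log_self one_lt_two _)⟩
  exact Nat.sInf_mem hne g

theorem DistinctSubsetSums.card_lt_davpm [Finite G] {ι : Type*} [Fintype ι] {g : ι → G}
    (hg : DistinctSubsetSums g) : Fintype.card ι < Davpm G := by
  by_contra! hle
  obtain ⟨f⟩ : Nonempty (Fin (Davpm G) ↪ ι) :=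
    Function.Embedding.nonempty_of_card_le (by simpa using hle)
  exact (hg.comp_embedding f).not_hasWZS (hasWZS_of_length_eq_davpm _)

theorem sum_log_add_one_le_davpm {ι : Type*} [Fintype ι] {m : ι → ℕ} (hm : ∀ i, m i ≠ 0)
    (e : G ≃+ ∀ i, ZMod (m i)) : ∑ i, Nat.log 2 (m i) + 1 ≤ Davpm G := by
  have (i : ι) : NeZero (m i) := ⟨hm i⟩
  have : Finite G := .of_equiv _ e.symm.toEquiv
  obtain ⟨g, hg⟩ := exists_distinctSubsetSums_of_addEquiv_pi_zmod hm e
  simpa using hg.card_lt_davpm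

variable (G) in
theorem davpm_mem_upperBounds : Davpm G ∈ upperBounds {k : ℕ | ∃ (t : ℕ) (m : Fin t → ℕ),
    (∀ i, 0 < m i) ∧ Nonempty (G ≃+ (∀ i, ZMod (m i))) ∧ k = (∑ i, Nat.log 2 (m i)) + 1} := by
  rintro _ ⟨t, m, hm, ⟨e⟩, rfl⟩
  exact sum_log_add_one_le_davpm (fun i ↦ (hm i).ne') e

variable (G) in
theorem davStarPM_le_davpm : DavStarPM G ≤ Davpm G :=
  csSup_le' (davpm_mem_upperBounds G)

theorem sum_log_add_one_le_davStarPM {t : ℕ} {m : Fin t → ℕ} (hm : ∀ i, 0 < m i)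
    (e : G ≃+ ∀ i, ZMod (m i)) : ∑ i, Nat.log 2 (m i) + 1 ≤ DavStarPM G :=
  le_csSup ⟨_, davpm_mem_upperBounds G⟩ ⟨t, m, hm, ⟨e⟩, rfl⟩

theorem log_add_log_add_one_le_davStarPM {M N : ℕ} (hM : 0 < M) (hN : 0 < N)
    (e : G ≃+ ZMod M × ZMod N) : Nat.log 2 M + Nat.log 2 N + 1 ≤ DavStarPM G := by
  let e' : G ≃+ ∀ i, ZMod (![M, N] i) :=
    e.trans (RingEquiv.piFinTwo fun i ↦ ZMod (![M, N] i)).symm.toAddEquiv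
  simpa using sum_log_add_one_le_davStarPM (by simp [Fin.forall_fin_two, hM, hN]) e'

theorem davStarPM_eq_davpm_and_davpm_eq_of_log_card_le {M N : ℕ} (hM : 0 < M) (hN : 0 < N)
    (e : G ≃+ ZMod M × ZMod N) (hlog : Nat.log 2 (Nat.card G) ≤ Nat.log 2 M + Nat.log 2 N) :
    DavStarPM G = Davpm G ∧ Davpm G = Nat.log 2 (Nat.card G) + 1 := by
  have : NeZero M := ⟨hM.ne'⟩
  have : NeZero N := ⟨hN.ne'⟩
  have : Finite G := .of_equiv _ e.symm.toEquiv
  have hlower := log_add_log_add_one_le_davStarPM hM hN e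
  have hmiddle := davStarPM_le_davpm G
  have hupper := davpm_le_log_card_add_one G
  omega

end DavenportConstants

section FractionalParts

variable {R : Type*} [CommRing R] [LinearOrder R] [IsStrictOrderedRing R] [FloorRing R] {x y : R}

theorem fract_add_eq_sub_one_of_one_le (h : 1 ≤ Int.fract x + Int.fract y) :
    Int.fract (x + y) = Int.fract x + Int.fract y - 1 := by
  refine Int.fract_eq_iff.mpr ⟨sub_nonneg.mpr h, ?_, ⌊x⌋ + ⌊y⌋ + 1, ?_⟩
  · linarith [Int.fract_lt_one x, Int.fract_lt_one y]
  · push_cast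
    linarith [Int.floor_add_fract x, Int.floor_add_fract y]

theorem floor_add_of_fract_add_fract_lt_one (h : Int.fract x + Int.fract y < 1) :
    ⌊x + y⌋ = ⌊x⌋ + ⌊y⌋ := by
  rw [Int.floor_eq_iff]
  push_cast
  constructor
  · linarith [Int.floor_le x, Int.floor_le y]
  · linarith [Int.floor_add_fract x, Int.floor_add_fract y]

end FractionalParts

theorem floor_logb_natCast_eq_natLog (b k : ℕ) : ⌊Real.logb b k⌋ = (Nat.log b k : ℤ) := by
  rw [Real.floor_logb_natCast k.cast_nonneg, Int.log_natCast]

theorem natLog_mul_of_fract_logb_add_lt_one {b M N : ℕ} (hM : M ≠ 0) (hN : N ≠ 0)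
    (h : Int.fract (Real.logb b M) + Int.fract (Real.logb b N) < 1) :
    Nat.log b (M * N) = Nat.log b M + Nat.log b N := by
  have hfloor := floor_add_of_fract_add_fract_lt_one h
  rw [← Real.logb_mul (by exact_mod_cast hM) (by exact_mod_cast hN), ← Nat.cast_mul] at hfloor
  simp only [floor_logb_natCast_eq_natLog] at hfloor
  exact_mod_cast hfloor

theorem fract_logb_mul_add_fract_logb_mul_lt_one {b a c d : ℝ} (ha : a ≠ 0) (hc : c ≠ 0)
    (hd : d ≠ 0) (hca : 1 ≤ Int.fract (Real.logb b c) + Int.fract (Real.logb b a))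
    (hda : 1 ≤ Int.fract (Real.logb b d) + Int.fract (Real.logb b a))
    (hsum : Int.fract (Real.logb b c) + Int.fract (Real.logb b d)
      + 2 * Int.fract (Real.logb b a) < 3) :
    Int.fract (Real.logb b (a * c)) + Int.fract (Real.logb b (a * d)) < 1 := by
  rw [mul_comm a c, mul_comm a d, Real.logb_mul hc ha, Real.logb_mul hd ha,
    fract_add_eq_sub_one_of_one_le hca, fract_add_eq_sub_one_of_one_le hda]
  linarith

/-- Moving the factor `c` of a cyclic group of order `b * c` over to a cyclic group of order `a`,
by the Chinese remainder theorem. -/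
def zmodProdZModMulEquiv {a b c : ℕ} (hbc : b.Coprime c) (hac : a.Coprime c) :
    ZMod a × ZMod (b * c) ≃+ ZMod b × ZMod (a * c) :=
  let splitFactor : ZMod a × ZMod (b * c) ≃+ ZMod a × ZMod b × ZMod c :=
    (AddEquiv.refl _).prodCongr (ZMod.chineseRemainder hbc).toAddEquiv
  let swap : (ZMod a × ZMod b) × ZMod c ≃+ (ZMod b × ZMod a) × ZMod c :=
    AddEquiv.prodComm.prodCongr (AddEquiv.refl _)
  let mergeFactor : ZMod b × ZMod a × ZMod c ≃+ ZMod b × ZMod (a * c) :=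
    (AddEquiv.refl _).prodCongr (ZMod.chineseRemainder hac).symm.toAddEquiv
  splitFactor.trans <| AddEquiv.prodAssoc.symm.trans <| swap.trans <|
    AddEquiv.prodAssoc.trans mergeFactor

theorem stmt6_general (n m1 m2 : ℕ) (hn : 0 < n) (hm1 : 0 < m1) (hm2 : 0 < m2)
    (hcop : Nat.Coprime (n * m1) m2)
    (hfract : Int.fract (Real.logb 2 (n * m1)) + Int.fract (Real.logb 2 (n * m2)) < 1) :
    DavStarPM (ZMod n × ZMod (n * m1 * m2)) = Davpm (ZMod n × ZMod (n * m1 * m2)) ∧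
    (Davpm (ZMod n × ZMod (n * m1 * m2)) : ℤ)
      = ⌊Real.logb 2 ((n : ℝ) ^ 2 * m1 * m2)⌋ + 1 := by
  have hM : 0 < n * m1 := by positivity
  have hN : 0 < n * m2 := by positivity
  have hcard : Nat.card (ZMod n × ZMod (n * m1 * m2)) = (n * m1) * (n * m2) := by
    rw [Nat.card_prod, Nat.card_zmod, Nat.card_zmod]
    ring
  have hlog : Nat.log 2 ((n * m1) * (n * m2)) = Nat.log 2 (n * m1) + Nat.log 2 (n * m2) :=
    natLog_mul_of_fract_logb_add_lt_one hM.ne' hN.ne' (by exact_mod_cast hfract)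
  have hfloor : ⌊Real.logb 2 ((n : ℝ) ^ 2 * m1 * m2)⌋ = Nat.log 2 ((n * m1) * (n * m2)) := by
    rw [← floor_logb_natCast_eq_natLog]
    push_cast
    ring_nf
  obtain ⟨hstar, hpm⟩ := davStarPM_eq_davpm_and_davpm_eq_of_log_card_le hM hN
    (zmodProdZModMulEquiv hcop hcop.coprime_mul_right) (by rw [hcard, hlog])
  refine ⟨hstar, ?_⟩
  rw [hpm, hcard, hfloor, Nat.cast_add_one]

theorem stmt6 (n m1 m2 : ℕ) (hn : 0 < n) (hm1 : 0 < m1) (hm2 : 0 < m2)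
    (h12 : Nat.Coprime m1 m2) (hn1 : Nat.Coprime n m1) (hn2 : Nat.Coprime n m2)
    (hfr1 : 1 ≤ Int.fract (Real.logb 2 m1) + Int.fract (Real.logb 2 n))
    (hfr2 : 1 ≤ Int.fract (Real.logb 2 m2) + Int.fract (Real.logb 2 n))
    (hsum : Int.fract (Real.logb 2 m1) + Int.fract (Real.logb 2 m2)
        + 2 * Int.fract (Real.logb 2 n) < 3) :
    DavStarPM (ZMod n × ZMod (n * m1 * m2)) = Davpm (ZMod n × ZMod (n * m1 * m2)) ∧
    (Davpm (ZMod n × ZMod (n * m1 * m2)) : ℤ)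
      = ⌊Real.logb 2 ((n : ℝ) ^ 2 * m1 * m2)⌋ + 1 :=
  stmt6_general n m1 m2 hn hm1 hm2 (hn2.mul_left h12) <|
    fract_logb_mul_add_fract_logb_mul_lt_one (by positivity) (by positivity) (by positivity)
      hfr1 hfr2 hsum
end
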